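/- For all integers 0 ≤ m ≤ n and every nonzero complex z: q^{-m}·(1-q^{2m+2}z²)·Ĉ_{n-m}(qz;q^{2m+2}|q²) + q^{-n}·z·(1-q^{2n+2m+2})·Ĉ_{n-m-1}(z;q^{2m+2}|q²) = q^{-n}·(1-q^{2n+2}z²)·Ĉ_{n-m}(z;q^{2m+2}|q²), where Ĉ_{-1} := 0. This family of identities is equivalent to the intertwining relation K_1(z)·L^T(μ(qz)) = L^T(μ(z))·M_1(z) (with μ(z) = (z+z⁻¹)/2) which decouples the matrix-valued Askey–Wilson q-difference operator D_1 after conjugation by L^T. -/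

import Mathlib

open Finset Polynomial MeasureTheory Matrix
open scoped BigOperators ComplexOrder

noncomputable section

/-- q-shifted factorial `(a;p)_n`. -/
def qp (a p : ℂ) (n : ℕ) : ℂ := ∏ j ∈ Finset.range n, (1 - a * p ^ j)

/-- q-Racah polynomial `R_n(μ(x);α,β,γ,δ;p)`. -/
def qRacah (p α β γ δ : ℂ) (n x : ℕ) : ℂ :=
  ∑ k ∈ Finset.range (min n x + 1),
    qp (p ^ (-(n : ℤ))) p k * qp (α * β * p ^ (n + 1)) p k *
        qp (p ^ (-(x : ℤ))) p k * qp (γ * δ * p ^ (x + 1)) p k /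
      (qp (α * p) p k * qp (β * δ * p) p k * qp (γ * p) p k * qp p p k) * p ^ k

/-- `IsUltra C` says that for each base `p`, parameter `β` and degree `n`, `C p β n` is
the continuous q-ultraspherical polynomial: it has degree at most `n` and its values at
`(z+z⁻¹)/2` are given by the symmetric Laurent sum. -/
def IsUltra (C : ℂ → ℂ → ℕ → Polynomial ℂ) : Prop :=
  ∀ (p β : ℂ) (n : ℕ),
    (C p β n).degree ≤ (n : ℕ) ∧
      ∀ z : ℂ, z ≠ 0 →
        (C p β n).eval ((z + z⁻¹) / 2) =
          ∑ r ∈ Finset.range (n + 1),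
            qp β p r * qp β p (n - r) / (qp p p r * qp p p (n - r)) * z ^ ((n : ℤ) - 2 * r)

/-- The matrix-valued polynomial `P_n` (entries in `Polynomial ℂ`); here `L = 2ℓ`. -/
def Pm (q : ℂ) (L : ℕ) (C : ℂ → ℂ → ℕ → Polynomial ℂ) (n : ℕ) :
    Matrix (Fin (L + 1)) (Fin (L + 1)) (Polynomial ℂ) :=
  Matrix.of fun i j =>
    ∑ k ∈ Finset.Icc (i : ℕ) (min L (n + (j : ℕ))),
      Polynomial.C
          ((-1 : ℂ) ^ k *
            q ^ ((n : ℤ) + (2 * (k : ℤ) + 1) * ((k : ℤ) - ((i : ℕ) : ℤ)) +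
                ((j : ℕ) : ℤ) * (2 * (k : ℤ) + 1) + 2 * (k : ℤ) * ((L : ℤ) + (n : ℤ) + 1) -
                (k : ℤ) ^ 2) *
            (qp (q ^ 2) (q ^ 2) k * qp (q ^ 2) (q ^ 2) (k + (i : ℕ)) /
              (qp (q ^ 2) (q ^ 2) (2 * k) * qp (q ^ 2) (q ^ 2) (i : ℕ))) *
            (qp (q ^ (-(2 * (L : ℤ)))) (q ^ 2) k *
                qp (q ^ (-(2 * ((j : ℕ) : ℤ) + 2 * (n : ℤ)))) (q ^ 2) k /
              (qp (q ^ 2) (q ^ 2) k * qp (q ^ (2 * (L : ℤ) + 4)) (q ^ 2) k)) *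
            (qp (q ^ 2) (q ^ 2) (n + (j : ℕ) - k) /
              qp (q ^ (4 * (k : ℤ) + 4)) (q ^ 2) (n + (j : ℕ) - k)) *
            qRacah (q ^ 2) 1 1 (q ^ (-(2 * (n : ℤ) + 2 * ((j : ℕ) : ℤ) + 2)))
              (q ^ (-(2 * (L : ℤ) + 2))) k (j : ℕ)) *
        (C (q ^ 2) (q ^ (-(2 * (k : ℤ)))) (k - (i : ℕ)) *
          C (q ^ 2) (q ^ (2 * (k : ℤ) + 2)) (n + (j : ℕ) - k))

/-- Evaluation of the matrix-valued polynomial `P_n` at a point. -/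
def evP (q : ℂ) (L : ℕ) (C : ℂ → ℂ → ℕ → Polynomial ℂ) (n : ℕ) (x : ℂ) :
    Matrix (Fin (L + 1)) (Fin (L + 1)) ℂ :=
  (Pm q L C n).map (Polynomial.eval x)

/-- The coefficients `α_t(m,n)` of the weight. -/
def alphaC (q : ℂ) (L m n t : ℕ) : ℂ :=
  q ^ (2 * (n : ℤ) * ((L : ℤ) + 1) - (n : ℤ) ^ 2 - (2 * (L : ℤ) + 3) * (t : ℤ) + (t : ℤ) ^ 2 -
      (L : ℤ) + (m : ℤ)) *
    ((1 - q ^ (2 * (L : ℤ) + 2)) / (1 - q ^ (2 * (m : ℤ) + 2))) *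
    (qp (q ^ 2) (q ^ 2) (L - n) * qp (q ^ 2) (q ^ 2) n / qp (q ^ 2) (q ^ 2) L) *
    ((-1 : ℂ) ^ ((m : ℤ) - (t : ℤ)) * qp (q ^ (2 * (m : ℤ) - 2 * (L : ℤ))) (q ^ 2) (n - t) /
      qp (q ^ (2 * (m : ℤ) + 4)) (q ^ 2) (n - t)) *
    (qp (q ^ (2 * (L : ℤ) + 4 - 2 * (t : ℤ))) (q ^ 2) t / qp (q ^ 2) (q ^ 2) t)

/-- The matrix weight `W(x)`. -/
def Wm (q : ℂ) (L : ℕ) (x : ℂ) : Matrix (Fin (L + 1)) (Fin (L + 1)) ℂ :=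
  Matrix.of fun i j =>
    ∑ t ∈ Finset.range (max (i : ℕ) (j : ℕ) + 1),
      alphaC q L (min (i : ℕ) (j : ℕ)) (max (i : ℕ) (j : ℕ)) t *
        (Polynomial.Chebyshev.U ℂ
            ((min (i : ℕ) (j : ℕ) : ℤ) + (max (i : ℕ) (j : ℕ) : ℤ) - 2 * (t : ℤ))).eval x

/-- The antidiagonal involution `J`. -/
def Jm (L : ℕ) : Matrix (Fin (L + 1)) (Fin (L + 1)) ℂ :=
  Matrix.of fun i j => if (i : ℕ) + (j : ℕ) = L then 1 else 0

/-- The diagonal leading-coefficient matrix `Γ_n`. -/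
def Gam (q : ℂ) (L n : ℕ) : Matrix (Fin (L + 1)) (Fin (L + 1)) ℂ :=
  Matrix.diagonal fun i =>
    2 ^ n * q ^ n * qp (q ^ (2 * ((i : ℕ) : ℤ) + 2)) (q ^ 2) n *
        qp (q ^ (2 * (L : ℤ) - 2 * ((i : ℕ) : ℤ) + 2)) (q ^ 2) n /
      (qp (q ^ 2) (q ^ 2) n * qp (q ^ (2 * (L : ℤ) + 4)) (q ^ 2) n)

/-- The squared-norm matrix `G_m`. -/
def Gmat (q : ℂ) (L m : ℕ) : Matrix (Fin (L + 1)) (Fin (L + 1)) ℂ :=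
  Matrix.diagonal fun i =>
    q ^ (2 * (m : ℤ) - (L : ℤ)) * (1 - q ^ (2 * (L : ℤ) + 2)) ^ 2 /
      ((1 - q ^ (2 * (m : ℤ) + 2 * ((i : ℕ) : ℤ) + 2)) *
        (1 - q ^ (2 * (L : ℤ) - 2 * ((i : ℕ) : ℤ) + 2 * (m : ℤ) + 2)))

/-- The unipotent lower triangular matrix `L(x)` of the LDU decomposition. -/
def Lm (q : ℂ) (L : ℕ) (C : ℂ → ℂ → ℕ → Polynomial ℂ) (x : ℂ) :
    Matrix (Fin (L + 1)) (Fin (L + 1)) ℂ :=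
  Matrix.of fun m k =>
    if (k : ℕ) ≤ (m : ℕ) then
      q ^ (((m : ℕ) : ℤ) - ((k : ℕ) : ℤ)) * qp (q ^ 2) (q ^ 2) (m : ℕ) *
          qp (q ^ 2) (q ^ 2) (2 * (k : ℕ) + 1) /
          (qp (q ^ 2) (q ^ 2) ((m : ℕ) + (k : ℕ) + 1) * qp (q ^ 2) (q ^ 2) (k : ℕ)) *
        (C (q ^ 2) (q ^ (2 * (k : ℕ) + 2)) ((m : ℕ) - (k : ℕ))).eval x
    else 0

/-- The claimed inverse of `L(x)`. -/
def Linv (q : ℂ) (L : ℕ) (C : ℂ → ℂ → ℕ → Polynomial ℂ) (x : ℂ) :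
    Matrix (Fin (L + 1)) (Fin (L + 1)) ℂ :=
  Matrix.of fun k n =>
    if (n : ℕ) ≤ (k : ℕ) then
      q ^ ((2 * ((k : ℕ) : ℤ) + 1) * (((k : ℕ) : ℤ) - ((n : ℕ) : ℤ))) *
          qp (q ^ 2) (q ^ 2) (k : ℕ) * qp (q ^ 2) (q ^ 2) ((k : ℕ) + (n : ℕ)) /
          (qp (q ^ 2) (q ^ 2) (2 * (k : ℕ)) * qp (q ^ 2) (q ^ 2) (n : ℕ)) *
        (C (q ^ 2) (q ^ (-(2 * ((k : ℕ) : ℤ)))) ((k : ℕ) - (n : ℕ))).eval x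
    else 0

/-- The constants `c_k(ℓ)`. -/
def ckC (q : ℂ) (L k : ℕ) : ℂ :=
  q ^ (-(L : ℤ)) / 4 * (1 - q ^ (4 * k + 2)) * qp (q ^ 2) (q ^ 2) (L + k + 1) *
      qp (q ^ 2) (q ^ 2) (L - k) * qp (q ^ 2) (q ^ 2) k ^ 4 /
    (qp (q ^ 2) (q ^ 2) (2 * k + 1) ^ 2 * qp (q ^ 2) (q ^ 2) L ^ 2)

/-- The diagonal part `T(x)` of the LDU decomposition. -/
def Tm (q : ℂ) (L : ℕ) (x : ℂ) : Matrix (Fin (L + 1)) (Fin (L + 1)) ℂ :=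
  Matrix.diagonal fun k =>
    ckC q L (k : ℕ) *
      (4 * ∏ j ∈ Finset.Icc 1 (k : ℕ), (1 - 2 * (2 * x ^ 2 - 1) * q ^ (2 * j) + q ^ (4 * j)))

/-- The coefficient matrix `M₁(z)` of the q-difference operator `D₁`. -/
def M1f (q : ℂ) (L : ℕ) (z : ℂ) : Matrix (Fin (L + 1)) (Fin (L + 1)) ℂ :=
  Matrix.of fun i j =>
    if (j : ℕ) = (i : ℕ) + 1 then
      -(q ^ (1 - ((i : ℕ) : ℤ)) * (1 - q ^ (2 * (i : ℕ) + 2)) / (1 - q ^ 2) ^ 2 *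
        (z / (1 - z ^ 2)))
    else if (j : ℕ) = (i : ℕ) then
      q ^ (1 - ((i : ℕ) : ℤ)) / (1 - q ^ 2) ^ 2 *
        ((1 - q ^ (2 * (i : ℕ) + 2) * z ^ 2) / (1 - z ^ 2))
    else 0

/-- `M₂(z) = J M₁(z) J`. -/
def M2f (q : ℂ) (L : ℕ) (z : ℂ) : Matrix (Fin (L + 1)) (Fin (L + 1)) ℂ :=
  Jm L * M1f q L z * Jm L

/-- The eigenvalue matrix `Λ_n(1)`. -/
def Lam1 (q : ℂ) (L n : ℕ) : Matrix (Fin (L + 1)) (Fin (L + 1)) ℂ :=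
  Matrix.diagonal fun j =>
    (q ^ (-((j : ℕ) : ℤ) - (n : ℤ) - 1) + q ^ (((j : ℕ) : ℤ) + (n : ℤ) + 1)) / (q⁻¹ - q) ^ 2

/-- The eigenvalue matrix `Λ_n(2) = J Λ_n(1) J`. -/
def Lam2 (q : ℂ) (L n : ℕ) : Matrix (Fin (L + 1)) (Fin (L + 1)) ℂ :=
  Jm L * Lam1 q L n * Jm L

/-- The diagonal coefficient matrix `K₁(z)` of the decoupled operator. -/
def K1f (q : ℂ) (L : ℕ) (z : ℂ) : Matrix (Fin (L + 1)) (Fin (L + 1)) ℂ :=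
  Matrix.diagonal fun i =>
    q ^ (1 - ((i : ℕ) : ℤ)) / (1 - q ^ 2) ^ 2 *
      ((1 - q ^ (2 * (i : ℕ) + 2) * z ^ 2) / (1 - z ^ 2))

/-- The symmetric Laurent polynomial `Ĉ_k(z;β|p)`. -/
def Chat (p β : ℂ) (k : ℕ) (z : ℂ) : ℂ :=
  ∑ r ∈ Finset.range (k + 1),
    qp β p r * qp β p (k - r) / (qp p p r * qp p p (k - r)) * z ^ ((k : ℤ) - 2 * (r : ℤ))

/-- The matrix polynomials `R_n(x) = L(x)ᵀ P_n(x) Γ_n⁻¹`. -/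
def Rmat (q : ℂ) (L : ℕ) (C : ℂ → ℂ → ℕ → Polynomial ℂ) (n : ℕ) (x : ℂ) :
    Matrix (Fin (L + 1)) (Fin (L + 1)) ℂ :=
  (Lm q L C x)ᵀ * evP q L C n x * (Gam q L n)⁻¹

/-!
The generating function of the `Ĉ_k(z;β|p)` factors as `G(t z⁻¹) G(t z)`, where
`G(t) = ∑ₙ (β;p)ₙ / (p;p)ₙ tⁿ` satisfies `(1 - t) G(t) = (1 - β t) G(p t)`. For `p = q²`, the
substitution `(z, t) ↦ (q z, q t)` fixes `t z⁻¹` and sends `t z` to `p t z`, while `t ↦ p t`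
multiplies both by `p`. The contiguous relation therefore amounts to an identity between products
of `G(t z)`, `G(t z⁻¹)`, `G(p t z)` and `G(p t z⁻¹)`, which follows from the functional equation
of `G` at `t z` and at `t z⁻¹`.
-/

section GeneratingFunction

open PowerSeries (rescale rescale_X rescale_rescale coeff_rescale coeff_mk)

lemma rescale_C {R : Type*} [CommSemiring R] (a b : R) :
    rescale a (PowerSeries.C b) = PowerSeries.C b := by
  ext n
  cases n <;> simp [coeff_rescale, PowerSeries.coeff_C]

lemma qp_succ (a p : ℂ) (n : ℕ) : qp a p (n + 1) = qp a p n * (1 - a * p ^ n) :=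
  Finset.prod_range_succ _ n

lemma qp_self_ne_zero {p : ℂ} (hp : ¬IsOfFinOrder p) (n : ℕ) : qp p p n ≠ 0 := by
  refine Finset.prod_ne_zero_iff.mpr fun j _ h => hp ?_
  rw [← pow_succ', sub_eq_zero] at h
  exact isOfFinOrder_iff_pow_eq_one.mpr ⟨j + 1, j.succ_pos, h.symm⟩

/-- The `q`-binomial series `₁φ₀(β; –; p, t) = ∑ₙ (β;p)ₙ / (p;p)ₙ tⁿ` in base `p`, as a formal
power series in `t`. -/
def qBinomialSeries (p β : ℂ) : PowerSeries ℂ :=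
  PowerSeries.mk fun n => qp β p n / qp p p n

lemma one_sub_X_mul_qBinomialSeries {p : ℂ} (hp : ¬IsOfFinOrder p) (β : ℂ) :
    (1 - PowerSeries.X) * qBinomialSeries p β =
      (1 - PowerSeries.C β * PowerSeries.X) * rescale p (qBinomialSeries p β) := by
  ext n
  cases n with
  | zero =>
    simp only [qBinomialSeries, sub_mul, one_mul, mul_assoc, map_sub, coeff_mk, coeff_rescale,
      PowerSeries.coeff_zero_X_mul, PowerSeries.coeff_C_mul, pow_zero, mul_zero]
  | succ n =>
    have hn : qp p p n ≠ 0 := qp_self_ne_zero hp n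
    have hn' : 1 - p ^ (n + 1) ≠ 0 := by
      rw [pow_succ']
      exact right_ne_zero_of_mul (qp_succ p p n ▸ qp_self_ne_zero hp (n + 1))
    simp only [qBinomialSeries, sub_mul, one_mul, mul_assoc, map_sub, coeff_mk, coeff_rescale,
      PowerSeries.coeff_succ_X_mul, PowerSeries.coeff_C_mul, qp_succ, ← pow_succ']
    field_simp
    ring

lemma one_sub_C_mul_X_mul_rescale_qBinomialSeries {p : ℂ} (hp : ¬IsOfFinOrder p) (β w : ℂ) :
    (1 - PowerSeries.C w * PowerSeries.X) * rescale w (qBinomialSeries p β) =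
      (1 - PowerSeries.C (β * w) * PowerSeries.X) * rescale (p * w) (qBinomialSeries p β) := by
  simpa [rescale_X, rescale_rescale, rescale_C, mul_assoc] using
    congrArg (rescale w) (one_sub_X_mul_qBinomialSeries hp β)

/-- The generating function `∑ₖ Ĉ_k(z;β|p) tᵏ`, as a formal power series in `t`. -/
def chatSeries (p β z : ℂ) : PowerSeries ℂ :=
  PowerSeries.mk fun k => Chat p β k z

lemma chatSeries_eq_rescale_mul_rescale (p β : ℂ) {z : ℂ} (hz : z ≠ 0) :
    chatSeries p β z =
      rescale z⁻¹ (qBinomialSeries p β) * rescale z (qBinomialSeries p β) := by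
  ext k
  rw [PowerSeries.coeff_mul, Finset.Nat.sum_antidiagonal_eq_sum_range_succ_mk]
  simp only [chatSeries, qBinomialSeries, Chat, coeff_mk, coeff_rescale]
  refine Finset.sum_congr rfl fun r hr => ?_
  have hzpow : z ^ ((k : ℤ) - 2 * r) = z⁻¹ ^ r * z ^ (k - r) := by
    rw [inv_pow, ← zpow_natCast, ← zpow_natCast, ← _root_.zpow_neg, ← zpow_add₀ hz,
      Nat.cast_sub (Finset.mem_range_succ_iff.mp hr)]
    ring_nf
  rw [hzpow, ← div_mul_div_comm]
  ring

lemma chatSeries_contiguous {q z : ℂ} (hq0 : q ≠ 0) (hq : ¬IsOfFinOrder q) (hz : z ≠ 0)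
    (β : ℂ) :
    PowerSeries.C (1 - β * z ^ 2) * rescale q (chatSeries (q ^ 2) β (q * z)) +
        PowerSeries.C z * (PowerSeries.X * (chatSeries (q ^ 2) β z -
          PowerSeries.C (β ^ 2) * rescale (q ^ 2) (chatSeries (q ^ 2) β z))) =
      chatSeries (q ^ 2) β z -
        PowerSeries.C (β * z ^ 2) * rescale (q ^ 2) (chatSeries (q ^ 2) β z) := by
  have hp : ¬IsOfFinOrder (q ^ 2) := by simpa [isOfFinOrder_pow] using hq
  have hqz : (q * z)⁻¹ * q = z⁻¹ := by field_simp
  have hqqz : q * z * q = q ^ 2 * z := by ring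
  have hCz : PowerSeries.C z * PowerSeries.C z⁻¹ = 1 := by
    rw [← map_mul, mul_inv_cancel₀ hz, map_one]
  have feq_z := one_sub_C_mul_X_mul_rescale_qBinomialSeries hp β z
  have feq_inv := one_sub_C_mul_X_mul_rescale_qBinomialSeries hp β z⁻¹
  simp only [chatSeries_eq_rescale_mul_rescale _ _ hz,
    chatSeries_eq_rescale_mul_rescale _ _ (mul_ne_zero hq0 hz), map_mul, map_sub, map_one, map_pow,
    rescale_rescale, hqz, hqqz, mul_comm _ (q ^ 2)] at feq_z feq_inv ⊢
  set G := qBinomialSeries (q ^ 2) β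
  linear_combination -rescale z⁻¹ G * feq_z -
    PowerSeries.C β * PowerSeries.C z ^ 2 * rescale (q ^ 2 * z) G * feq_inv -
    PowerSeries.C β * PowerSeries.C z * PowerSeries.X * rescale (q ^ 2 * z) G *
      (rescale z⁻¹ G - PowerSeries.C β * rescale (q ^ 2 * z⁻¹) G) * hCz

lemma chat_succ_contiguous {q z : ℂ} (hq0 : q ≠ 0) (hq : ¬IsOfFinOrder q) (hz : z ≠ 0)
    (β : ℂ) (k : ℕ) :
    q ^ (k + 1) * (1 - β * z ^ 2) * Chat (q ^ 2) β (k + 1) (q * z) +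
        z * (1 - β ^ 2 * (q ^ 2) ^ k) * Chat (q ^ 2) β k z =
      (1 - β * (q ^ 2) ^ (k + 1) * z ^ 2) * Chat (q ^ 2) β (k + 1) z := by
  have h := congrArg (PowerSeries.coeff (k + 1)) (chatSeries_contiguous hq0 hq hz β)
  simp only [chatSeries, LinearMap.map_add, LinearMap.map_sub, coeff_mk, coeff_rescale,
    PowerSeries.coeff_C_mul, PowerSeries.coeff_succ_X_mul] at h
  linear_combination h

end GeneratingFunction

theorem stmt19_general {q : ℂ} (hq0 : q ≠ 0) (hq : ¬IsOfFinOrder q) {m n : ℕ}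
    (hmn : m ≤ n) {z : ℂ} (hz : z ≠ 0) :
    q ^ (-(m : ℤ)) * (1 - q ^ (2 * m + 2) * z ^ 2) *
        Chat (q ^ 2) (q ^ (2 * m + 2)) (n - m) (q * z) +
      q ^ (-(n : ℤ)) * z * (1 - q ^ (2 * n + 2 * m + 2)) *
        (if m < n then Chat (q ^ 2) (q ^ (2 * m + 2)) (n - m - 1) z else 0) =
      q ^ (-(n : ℤ)) * (1 - q ^ (2 * n + 2) * z ^ 2) *
        Chat (q ^ 2) (q ^ (2 * m + 2)) (n - m) z := by
  obtain ⟨k, rfl⟩ := Nat.exists_eq_add_of_le hmn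
  cases k with
  | zero => simp [Chat, qp]
  | succ k =>
    have hqm : q ^ (-(m : ℤ)) = q ^ (-((m + (k + 1) : ℕ) : ℤ)) * q ^ (k + 1) := by
      rw [← zpow_natCast q (k + 1), ← zpow_add₀ hq0]
      push_cast
      ring_nf
    rw [if_pos (by lia), Nat.add_sub_cancel_left, Nat.add_sub_cancel, hqm]
    linear_combination q ^ (-((m + (k + 1) : ℕ) : ℤ)) *
      chat_succ_contiguous hq0 hq hz (q ^ (2 * m + 2)) k

/-- the three-term contiguous relation for the symmetric Laurent
polynomials `Ĉ_k(z;q^{2m+2}|q²)` underlying the decoupling of the matrix-valued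
Askey–Wilson q-difference operator (with `Ĉ_{-1} := 0`, i.e. the middle term is absent
when `m = n`). -/
theorem stmt19 (q : ℝ) (hq0 : 0 < q) (hq1 : q < 1) (m n : ℕ) (hmn : m ≤ n)
    (z : ℂ) (hz : z ≠ 0) :
    (q : ℂ) ^ (-(m : ℤ)) * (1 - (q : ℂ) ^ (2 * m + 2) * z ^ 2) *
        Chat ((q : ℂ) ^ 2) ((q : ℂ) ^ (2 * m + 2)) (n - m) ((q : ℂ) * z) +
      (q : ℂ) ^ (-(n : ℤ)) * z * (1 - (q : ℂ) ^ (2 * n + 2 * m + 2)) *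
        (if m < n then Chat ((q : ℂ) ^ 2) ((q : ℂ) ^ (2 * m + 2)) (n - m - 1) z else 0) =
      (q : ℂ) ^ (-(n : ℤ)) * (1 - (q : ℂ) ^ (2 * n + 2) * z ^ 2) *
        Chat ((q : ℂ) ^ 2) ((q : ℂ) ^ (2 * m + 2)) (n - m) z := by
  have hq : ¬IsOfFinOrder (q : ℂ) := fun h =>
    hq1.ne (by simpa [abs_of_pos hq0] using h.norm_eq_one)
  exact stmt19_general (Complex.ofReal_ne_zero.mpr hq0.ne') hq hmn hz

end
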